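/- arXiv:2203.16206 — 2 statements merged into one kernel-verified Lean document; each statement's English description precedes it below -/
import Mathlib

section
/- Let φ : ℝ → ℝ be differentiable with φ(0) = 0 and φ'(u) = √(c² + 2·cos θ·B(u) − D²·B(u)²) for all u, where B(u) = λ₁²·cos²(φ u) + λ₂²·sin²(φ u) and D = sin θ / c, let U > 0 satisfy φ(u + U) = φ(u) + π for all u, and define G : ℝ → ℝ by G(u) = ∫₀^u (c − φ'(s))/B(s) ds. Then: (1) G is odd, i.e. G(−u) = −G(u) for all u; (2) G(u + U) = G(u) + G(U) for all u ∈ ℝ; (3) G(k·U) = k·G(U) for every integer k. -/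
open Real

/-- The critical angle `θ_c⁺`. -/
noncomputable def thetaPlus (l1 c : ℝ) : ℝ :=
  if c > Real.sqrt 2 * l1 then π else Real.arccos (1 - c ^ 2 / l1 ^ 2)

/-- The quantity `B(u) = λ₁² cos²(φ u) + λ₂² sin²(φ u)`. -/
noncomputable def Bfun (l1 l2 : ℝ) (φ : ℝ → ℝ) (u : ℝ) : ℝ :=
  l1 ^ 2 * Real.cos (φ u) ^ 2 + l2 ^ 2 * Real.sin (φ u) ^ 2

/-- The function `G(u) = ∫₀^u (c - φ'(s))/B(s) ds`. -/
noncomputable def Gfun (l1 l2 c : ℝ) (φ : ℝ → ℝ) (u : ℝ) : ℝ :=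
  ∫ s in (0 : ℝ)..u, (c - deriv φ s) / Bfun l1 l2 φ s

theorem aux_F_pos (l1 l2 c θ : ℝ) (hl : l1 ≥ l2) (hl2 : l2 > 0) (hc : c > 0)
    (hθ : |θ| < thetaPlus l1 c) (x : ℝ) :
    0 < c ^ 2 + 2 * Real.cos θ * (l1 ^ 2 * Real.cos x ^ 2 + l2 ^ 2 * Real.sin x ^ 2) -
        (Real.sin θ / c) ^ 2 * (l1 ^ 2 * Real.cos x ^ 2 + l2 ^ 2 * Real.sin x ^ 2) ^ 2 := by
  have hl1 : 0 < l1 := lt_of_lt_of_le hl2 hl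
  set B := l1 ^ 2 * Real.cos x ^ 2 + l2 ^ 2 * Real.sin x ^ 2 with hB
  have hs := Real.sin_sq_add_cos_sq x
  have hB0 : 0 ≤ B := by positivity
  have hB1 : B ≤ l1 ^ 2 := by
    have h2 : l2 ^ 2 ≤ l1 ^ 2 := by gcongr
    have : l2 ^ 2 * Real.sin x ^ 2 ≤ l1 ^ 2 * Real.sin x ^ 2 := by gcongr
    nlinarith
  have hcos1 := Real.cos_le_one θ
  have hcos2 := Real.neg_one_le_cos θ
  have key : l1 ^ 2 * (1 - Real.cos θ) < c ^ 2 := by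
    unfold thetaPlus at hθ
    split_ifs at hθ with h
    · have h3 : 2 * l1 ^ 2 < c ^ 2 := by
        have : (√2 * l1) ^ 2 < c ^ 2 := by gcongr
        rwa [mul_pow, Real.sq_sqrt (by norm_num)] at this
      nlinarith [sq_nonneg l1]
    · have h1 : Real.cos (Real.arccos (1 - c ^ 2 / l1 ^ 2)) < Real.cos |θ| :=
        Real.cos_lt_cos_of_nonneg_of_le_pi (abs_nonneg _) (Real.arccos_le_pi _) hθ
      push Not at h
      have h3 : c ^ 2 ≤ 2 * l1 ^ 2 := by
        have : c ^ 2 ≤ (√2 * l1) ^ 2 := by gcongr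
        rwa [mul_pow, Real.sq_sqrt (by norm_num)] at this
      have h4 : c ^ 2 / l1 ^ 2 ≤ 2 := by
        rw [div_le_iff₀ (by positivity)]; exact h3
      have h5 : 0 ≤ c ^ 2 / l1 ^ 2 := by positivity
      rw [Real.cos_arccos (by linarith) (by linarith), Real.cos_abs] at h1
      have h6 : 1 - Real.cos θ < c ^ 2 / l1 ^ 2 := by linarith
      rw [lt_div_iff₀ (by positivity)] at h6
      linarith
  have hk : B * (1 - Real.cos θ) < c ^ 2 := by nlinarith
  have hsin : Real.sin θ ^ 2 = (1 - Real.cos θ) * (1 + Real.cos θ) := by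
    nlinarith [Real.sin_sq_add_cos_sq θ]
  have hc2 : 0 < c ^ 2 := by positivity
  have e : c ^ 2 + 2 * Real.cos θ * B - (Real.sin θ / c) ^ 2 * B ^ 2
      = (c ^ 2 + (1 + Real.cos θ) * B) * (c ^ 2 - B * (1 - Real.cos θ)) / c ^ 2 := by
    rw [div_pow, hsin]; field_simp; ring
  rw [e]
  have : 0 ≤ (1 + Real.cos θ) * B := mul_nonneg (by linarith) hB0
  exact div_pos (mul_pos (by linarith) (by linarith)) hc2

theorem aux_odd (F : ℝ → ℝ) (hF : Continuous F) (hpos : ∀ x, 0 < F x)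
    (heven : ∀ x, F (-x) = F x) (φ : ℝ → ℝ) (hφ : Differentiable ℝ φ) (hφ0 : φ 0 = 0)
    (hφ' : ∀ u, deriv φ u = F (φ u)) (u : ℝ) : φ (-u) = -φ u := by
  have hg : Continuous (fun x => (F x)⁻¹) := hF.inv₀ (fun x => (hpos x).ne')
  set H : ℝ → ℝ := fun x => ∫ t in (0 : ℝ)..x, (F t)⁻¹ with hH
  have hd : ∀ x, HasDerivAt H (F x)⁻¹ x := fun x => hg.integral_hasStrictDerivAt 0 x |>.hasDerivAt
  have hmono : StrictMono H := strictMono_of_deriv_pos (fun x => by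
    rw [(hd x).deriv]; exact inv_pos.2 (hpos x))
  have hHodd : ∀ x, H (-x) = -H x := by
    intro x
    have h := intervalIntegral.integral_comp_neg (a := 0) (b := x) (fun t => (F t)⁻¹)
    simp only [heven, neg_zero] at h
    simp only [hH]
    rw [h, intervalIntegral.integral_symm]
  have hD : ∀ v, HasDerivAt (fun v => H (φ v) - v) 0 v := by
    intro v
    have h1 := ((hd (φ v)).comp v (hφ v).hasDerivAt).sub (hasDerivAt_id v)
    rw [hφ', inv_mul_cancel₀ (hpos _).ne', sub_self] at h1
    exact h1
  have hid : ∀ v, H (φ v) = v := by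
    intro v
    have h := is_const_of_deriv_eq_zero (fun v => (hD v).differentiableAt)
      (fun v => (hD v).deriv) v 0
    have h0 : H 0 = 0 := by simp [hH]
    simp only [hφ0, h0] at h
    linarith
  apply hmono.injective
  rw [hHodd, hid, hid]

theorem catenoid_G_odd_quasiperiodic
    (l1 l2 c θ : ℝ) (hl : l1 ≥ l2) (hl2 : l2 > 0) (hc : c > 0)
    (hθ : |θ| < thetaPlus l1 c)
    (φ : ℝ → ℝ) (hφ : Differentiable ℝ φ) (hφ0 : φ 0 = 0)
    (hφ' : ∀ u, deriv φ u =
      Real.sqrt (c ^ 2 + 2 * Real.cos θ * Bfun l1 l2 φ u -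
        (Real.sin θ / c) ^ 2 * Bfun l1 l2 φ u ^ 2))
    (U : ℝ) (hU : U > 0) (hφU : ∀ u, φ (u + U) = φ u + π) :
    (∀ u, Gfun l1 l2 c φ (-u) = -Gfun l1 l2 c φ u) ∧
    (∀ u, Gfun l1 l2 c φ (u + U) = Gfun l1 l2 c φ u + Gfun l1 l2 c φ U) ∧
    (∀ k : ℤ, Gfun l1 l2 c φ (k * U) = k * Gfun l1 l2 c φ U) := by
  have hl1 : 0 < l1 := lt_of_lt_of_le hl2 hl
  have hodd : ∀ u, φ (-u) = -φ u := by
    refine aux_odd (fun x => Real.sqrt (c ^ 2 + 2 * Real.cos θ *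
      (l1 ^ 2 * Real.cos x ^ 2 + l2 ^ 2 * Real.sin x ^ 2) -
        (Real.sin θ / c) ^ 2 * (l1 ^ 2 * Real.cos x ^ 2 + l2 ^ 2 * Real.sin x ^ 2) ^ 2))
      (by fun_prop) (fun x => Real.sqrt_pos.2 (aux_F_pos l1 l2 c θ hl hl2 hc hθ x)) ?_ φ hφ hφ0 hφ'
    intro x
    simp
  have hBc : Continuous (Bfun l1 l2 φ) := by
    have := hφ.continuous
    unfold Bfun
    fun_prop
  have hBpos : ∀ s, Bfun l1 l2 φ s ≠ 0 := by
    intro s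
    unfold Bfun
    have hs := Real.sin_sq_add_cos_sq (φ s)
    have h2 : l2 ^ 2 ≤ l1 ^ 2 := by gcongr
    have : l2 ^ 2 * Real.cos (φ s) ^ 2 ≤ l1 ^ 2 * Real.cos (φ s) ^ 2 := by gcongr
    have : 0 < l2 ^ 2 := by positivity
    apply ne_of_gt
    nlinarith
  have hBe : ∀ s, Bfun l1 l2 φ (-s) = Bfun l1 l2 φ s := by
    intro s; simp [Bfun, hodd]
  have hBp : ∀ s, Bfun l1 l2 φ (s + U) = Bfun l1 l2 φ s := by
    intro s; simp [Bfun, hφU]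
  have hde : ∀ s, deriv φ (-s) = deriv φ s := by
    intro s; rw [hφ', hφ', hBe]
  have hdp : ∀ s, deriv φ (s + U) = deriv φ s := by
    intro s; rw [hφ', hφ', hBp]
  have hdc : Continuous (deriv φ) := by
    rw [funext hφ']; fun_prop
  have hcont : Continuous (fun s => (c - deriv φ s) / Bfun l1 l2 φ s) :=
    (continuous_const.sub hdc).div hBc hBpos
  have h1 : ∀ u, Gfun l1 l2 c φ (-u) = -Gfun l1 l2 c φ u := by
    intro u
    have h := intervalIntegral.integral_comp_neg (a := 0) (b := u)
      (fun s => (c - deriv φ s) / Bfun l1 l2 φ s)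
    simp only [hBe, hde, neg_zero] at h
    unfold Gfun
    rw [h, intervalIntegral.integral_symm]
  have h2 : ∀ u, Gfun l1 l2 c φ (u + U) = Gfun l1 l2 c φ u + Gfun l1 l2 c φ U := by
    intro u
    have h := intervalIntegral.integral_comp_add_right (a := 0) (b := u)
      (fun s => (c - deriv φ s) / Bfun l1 l2 φ s) U
    simp only [hBp, hdp, zero_add] at h
    unfold Gfun
    rw [h, add_comm (intervalIntegral _ _ _ _), intervalIntegral.integral_add_adjacent_intervals
      (hcont.intervalIntegrable _ _) (hcont.intervalIntegrable _ _)]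
  refine ⟨h1, h2, ?_⟩
  have h0 : Gfun l1 l2 c φ 0 = 0 := by simp [Gfun]
  have hn : ∀ n : ℕ, Gfun l1 l2 c φ (n * U) = n * Gfun l1 l2 c φ U := by
    intro n
    induction n with
    | zero => simp [h0]
    | succ n ih =>
      push_cast
      rw [add_mul, one_mul, h2, ih]; ring
  intro k
  obtain ⟨n, rfl | rfl⟩ := k.eq_nat_or_neg
  · simpa using hn n
  · push_cast
    rw [neg_mul, h1, hn]; ring
end

section
/- Let θ̃ : (0,∞) → ℝ be any function such that for every c > 0, θ̃(c) ∈ (0, π/2) ∩ (0, θ_c⁺) and H(c, θ̃(c)) = 0. Then θ̃(c) tends to π/2 as c tends to +∞. -/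
open Real

/-- `B̂(x) = λ₁² x² + λ₂² (1 - x²)`. -/
noncomputable def Bhat (l1 l2 x : ℝ) : ℝ := l1 ^ 2 * x ^ 2 + l2 ^ 2 * (1 - x ^ 2)

/-- `P(x) = c² + 2 cos θ B̂(x) - D² B̂(x)²` with `D = sin θ / c`. -/
noncomputable def Pfun (l1 l2 c θ x : ℝ) : ℝ :=
  c ^ 2 + 2 * Real.cos θ * Bhat l1 l2 x - (Real.sin θ / c) ^ 2 * Bhat l1 l2 x ^ 2

/-- The period function `H(c,θ)`. -/
noncomputable def Hfun (l1 l2 c θ : ℝ) : ℝ :=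
  ∫ x in (-1 : ℝ)..1,
    ((Real.sin θ / c) ^ 2 * Bhat l1 l2 x * (2 * c + Real.sqrt (Pfun l1 l2 c θ x)) -
        2 * c * Real.cos θ) /
      ((c + Real.sqrt (Pfun l1 l2 c θ x)) * Real.sqrt ((1 - x ^ 2) * Pfun l1 l2 c θ x))

lemma aux_int : IntervalIntegrable (fun x : ℝ => 1 / Real.sqrt (1 - x ^ 2)) MeasureTheory.volume (-1) 1 := by
  apply intervalIntegral.intervalIntegrable_deriv_of_nonneg (g := Real.arcsin)
  · exact Real.continuous_arcsin.continuousOn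
  · intro x hx
    simp only [min_eq_left (by norm_num : (-1:ℝ) ≤ 1), max_eq_right (by norm_num : (-1:ℝ) ≤ 1)] at hx
    exact Real.hasDerivAt_arcsin (by linarith [hx.1]) (by linarith [hx.2])
  · intro x hx
    positivity

lemma aux_bhat (l1 l2 : ℝ) (hl : l1 ≥ l2) (hl2 : l2 > 0) (x : ℝ) (hx : x ∈ Set.Icc (-1:ℝ) 1) :
    0 ≤ Bhat l1 l2 x ∧ Bhat l1 l2 x ≤ l1 ^ 2 := by
  have h1 : 0 ≤ 1 - x ^ 2 := by nlinarith [hx.1, hx.2]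
  have h2 : l2 ^ 2 ≤ l1 ^ 2 := by nlinarith
  unfold Bhat
  constructor
  · positivity
  · nlinarith [mul_le_mul_of_nonneg_right h2 h1]

lemma aux_cos (l1 l2 : ℝ) (hl : l1 ≥ l2) (hl2 : l2 > 0) (c θ : ℝ) (hc : 0 < c) (hcl : l1 < c)
    (hcos : 0 ≤ Real.cos θ) (hH : Hfun l1 l2 c θ = 0) : Real.cos θ ≤ 2 * l1 ^ 2 / c ^ 2 := by
  by_contra! hlt
  have hl1 : 0 < l1 := by linarith
  have hsin : Real.sin θ ^ 2 ≤ 1 := Real.sin_sq_le_one θ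
  have hD : (Real.sin θ / c) ^ 2 ≤ 1 / c ^ 2 := by
    rw [div_pow]; gcongr
  have hcl2 : l1 ^ 2 < c ^ 2 := by gcongr
  have hP : ∀ x ∈ Set.Icc (-1:ℝ) 1, 0 < Pfun l1 l2 c θ x := by
    intro x hx
    obtain ⟨h0, h1⟩ := aux_bhat l1 l2 hl hl2 x hx
    have h2 : (Real.sin θ / c) ^ 2 * Bhat l1 l2 x ^ 2 < c ^ 2 := by
      calc (Real.sin θ / c) ^ 2 * Bhat l1 l2 x ^ 2 ≤ 1 / c ^ 2 * (l1 ^ 2) ^ 2 := by gcongr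
        _ < 1 / c ^ 2 * (c ^ 2) ^ 2 := by gcongr
        _ = c ^ 2 := by field_simp
    have h3 : 0 ≤ 2 * Real.cos θ * Bhat l1 l2 x := by positivity
    unfold Pfun
    linarith
  have hP2 : ∀ x ∈ Set.Icc (-1:ℝ) 1, Real.sqrt (Pfun l1 l2 c θ x) ≤ 2 * c := by
    intro x hx
    obtain ⟨h0, h1⟩ := aux_bhat l1 l2 hl hl2 x hx
    apply Real.sqrt_le_iff.2 ⟨by positivity, ?_⟩
    have h3 : Real.cos θ * Bhat l1 l2 x ≤ 1 * l1 ^ 2 := by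
      gcongr
      exact Real.cos_le_one θ
    have : 0 ≤ (Real.sin θ / c) ^ 2 * Bhat l1 l2 x ^ 2 := by positivity
    unfold Pfun
    nlinarith
  have hBc : Continuous (Bhat l1 l2) := by unfold Bhat; fun_prop
  have hPc : Continuous (Pfun l1 l2 c θ) := by unfold Pfun; fun_prop
  have hI := (aux_int.mul_continuousOn (g := fun x => ((Real.sin θ / c) ^ 2 * Bhat l1 l2 x * (2 * c + Real.sqrt (Pfun l1 l2 c θ x)) -
        2 * c * Real.cos θ) /
      ((c + Real.sqrt (Pfun l1 l2 c θ x)) * Real.sqrt (Pfun l1 l2 c θ x))) (by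
      rw [Set.uIcc_of_le (by norm_num)]
      apply ContinuousOn.div
      · fun_prop
      · fun_prop
      · intro x hx
        have := Real.sqrt_pos.2 (hP x hx)
        positivity)).neg
  have hpos := intervalIntegral.intervalIntegral_pos_of_pos_on hI (by
    intro x hx
    have hx' := Set.Ioo_subset_Icc_self hx
    have hs := Real.sqrt_pos.2 (hP x hx')
    obtain ⟨h0, h1⟩ := aux_bhat l1 l2 hl hl2 x hx'
    have h1x : 0 < Real.sqrt (1 - x ^ 2) := Real.sqrt_pos.2 (by nlinarith [hx.1, hx.2])
    have hnum : (Real.sin θ / c) ^ 2 * Bhat l1 l2 x * (2 * c + Real.sqrt (Pfun l1 l2 c θ x)) -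
        2 * c * Real.cos θ < 0 := by
      have ha : (Real.sin θ / c) ^ 2 * Bhat l1 l2 x * (2 * c + Real.sqrt (Pfun l1 l2 c θ x))
        ≤ 1 / c ^ 2 * l1 ^ 2 * (2 * c + 2 * c) := by
        gcongr
        exact hP2 x hx'
      have hb : 2 * c * (2 * l1 ^ 2 / c ^ 2) < 2 * c * Real.cos θ := by gcongr
      have hc' : 1 / c ^ 2 * l1 ^ 2 * (2 * c + 2 * c) = 2 * c * (2 * l1 ^ 2 / c ^ 2) := by ring
      linarith
    simp only [Pi.neg_apply]
    rw [neg_pos]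
    exact mul_neg_of_pos_of_neg (by positivity) (div_neg_of_neg_of_pos hnum (by positivity))) (by norm_num)
  have : Hfun l1 l2 c θ < 0 := by
    simp only [Pi.neg_apply, intervalIntegral.integral_neg, neg_pos] at hpos
    convert hpos using 1
    unfold Hfun
    apply intervalIntegral.integral_congr
    intro x hx
    rw [Set.uIcc_of_le (by norm_num)] at hx
    simp only
    rw [Real.sqrt_mul (by nlinarith [hx.1, hx.2])]
    rw [div_mul_div_comm, one_mul]
    congr 1
    ring
  linarith

theorem catenoid_theta_tendsto_pi_div_two
    (l1 l2 : ℝ) (hl : l1 ≥ l2) (hl2 : l2 > 0)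
    (θt : ℝ → ℝ)
    (hθt : ∀ c > 0, θt c ∈ Set.Ioo 0 (π / 2) ∩ Set.Ioo 0 (thetaPlus l1 c) ∧
      Hfun l1 l2 c (θt c) = 0) :
    Filter.Tendsto θt Filter.atTop (nhds (π / 2)) := by
  have hcos : Filter.Tendsto (fun c => Real.cos (θt c)) Filter.atTop (nhds 0) := by
    have hlim : Filter.Tendsto (fun c : ℝ => 2 * l1 ^ 2 / c ^ 2) Filter.atTop (nhds 0) :=
      Filter.Tendsto.div_atTop tendsto_const_nhds (Filter.tendsto_pow_atTop (by norm_num))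
    refine tendsto_of_tendsto_of_tendsto_of_le_of_le' tendsto_const_nhds hlim ?_ ?_
    · filter_upwards [Filter.eventually_gt_atTop 0] with c hc
      obtain ⟨⟨h1, _⟩, _⟩ := hθt c hc
      exact Real.cos_nonneg_of_mem_Icc ⟨by linarith [h1.1, Real.pi_pos], h1.2.le⟩
    · filter_upwards [Filter.eventually_gt_atTop 0, Filter.eventually_gt_atTop l1] with c hc hc1
      obtain ⟨⟨h1, _⟩, h2⟩ := hθt c hc
      exact aux_cos l1 l2 hl hl2 c _ hc hc1
        (Real.cos_nonneg_of_mem_Icc ⟨by linarith [h1.1, Real.pi_pos], h1.2.le⟩) h2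
  have h := (Real.continuous_arccos.tendsto 0).comp hcos
  rw [Real.arccos_zero] at h
  refine h.congr' ?_
  filter_upwards [Filter.eventually_gt_atTop 0] with c hc
  obtain ⟨⟨h1, _⟩, _⟩ := hθt c hc
  exact Real.arccos_cos h1.1.le (by linarith [h1.2, Real.pi_pos])
end
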